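/- arXiv:1607.07267 — 7 statements merged into one kernel-verified Lean document; each statement's English description precedes it below -/
import Mathlib

section
/- Let K ∈ ℝ^{p×p} be symmetric positive definite with K_{ij} ≤ 0 for all i ≠ j, and let P be a symmetric sparsity pattern on {1,…,p}×{1,…,p} containing all diagonal pairs (i,i). Define P_K by (P_K)_{ij} = K_{ij} if (i,j) ∈ P and (P_K)_{ij} = 0 otherwise. Then P_K is symmetric positive definite, and for every symmetric positive semidefinite matrix X ∈ ℝ^{p×p} with X_{ij} = 0 whenever (i,j) ∉ P, one has ‖P_K − K‖_F ≤ ‖X − K‖_F, where ‖·‖_F denotes the Frobenius norm. In other words, P_K is the projection of K, in Frobenius norm, onto the set of positive semidefinite matrices vanishing off the pattern P. -/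
open Matrix

/-- The Frobenius norm of a real matrix. -/
noncomputable def frobNorm {p : ℕ} (A : Matrix (Fin p) (Fin p) ℝ) : ℝ :=
  Real.sqrt (∑ i, ∑ j, (A i j) ^ 2)

/-!
Passing from a vector `x` to `|x|` only decreases the quadratic form of a matrix with nonpositive
off-diagonal entries, and for `|x|` deleting such entries only increases it. Hence the form of the
truncated matrix at `x` is at least the form of `K` at `|x|`, which is positive. Minimality is
entrywise: on the pattern the truncated matrix agrees with `K`, and off the pattern every competitor
has the same entry `0`.
-/

section PosDef

variable {n R : Type*} [CommRing R] [LinearOrder R] [IsOrderedRing R]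

theorem abs_mul_mul_abs_le_mul_mul {a b : R} (h : |b| ≤ -a) (x y : R) :
    |x| * a * |y| ≤ x * b * y := by
  have habs : |x * b * y| ≤ -(|x| * a * |y|) := calc
    |x * b * y| = |x| * |b| * |y| := by rw [abs_mul, abs_mul]
    _ ≤ |x| * -a * |y| := by gcongr
    _ = -(|x| * a * |y|) := by ring
  simpa only [neg_neg] using neg_le_of_abs_le habs

variable [StarRing R] [TrivialStar R]

theorem posDef_of_abs_le_neg_of_posDef {A B : Matrix n n R} (hA : A.PosDef) (hB : B.IsHermitian)
    (hdiag : ∀ i, A i i ≤ B i i) (hoff : ∀ i j, i ≠ j → |B i j| ≤ -A i j) : B.PosDef := by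
  refine ⟨hB, fun x hx => ?_⟩
  have hterm (i j : n) : |x i| * A i j * |x j| ≤ x i * B i j * x j := by
    obtain rfl | hij := eq_or_ne i j
    · calc
        |x i| * A i i * |x i| = A i i * (x i * x i) := by rw [← abs_mul_abs_self (x i)]; ring
        _ ≤ B i i * (x i * x i) := by gcongr; exacts [mul_self_nonneg _, hdiag i]
        _ = x i * B i i * x i := by ring
    · exact abs_mul_mul_abs_le_mul_mul (hoff i j hij) (x i) (x j)
  have habs_ne_zero : x.mapRange abs abs_zero ≠ 0 := by
    simpa [Finsupp.ext_iff] using hx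
  calc
    0 < x.sum fun i xi => x.sum fun j xj => |xi| * A i j * |xj| := by
      simpa [Finsupp.sum_mapRange_index] using hA.2 habs_ne_zero
    _ ≤ x.sum fun i xi => x.sum fun j xj => star xi * B i j * xj := by
      simp only [star_trivial]
      exact Finset.sum_le_sum fun i _ => Finset.sum_le_sum fun j _ => hterm i j

end PosDef

section PatternPart

variable {m n α : Type*}

/-- The part of a matrix supported on a sparsity pattern `P`, written `P_A` on paper: the entries
outside `P` are replaced by zero. It is encoded through `Set.indicator`, so that no decidability of
`P` is required. -/
noncomputable def patternPart [Zero α] (P : Set (m × n)) (A : Matrix m n α) : Matrix m n α :=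
  of fun i j => P.indicator (Function.uncurry A) (i, j)

theorem patternPart_apply [Zero α] (P : Set (m × n)) [DecidablePred (· ∈ P)] (A : Matrix m n α)
    (i : m) (j : n) : patternPart P A i j = if (i, j) ∈ P then A i j else 0 :=
  Set.indicator_apply P (Function.uncurry A) (i, j)

theorem patternPart_apply_of_mem [Zero α] {P : Set (m × n)} {i : m} {j : n} (h : (i, j) ∈ P)
    (A : Matrix m n α) : patternPart P A i j = A i j :=
  Set.indicator_of_mem h _

theorem patternPart_apply_of_notMem [Zero α] {P : Set (m × n)} {i : m} {j : n} (h : (i, j) ∉ P)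
    (A : Matrix m n α) : patternPart P A i j = 0 :=
  Set.indicator_of_notMem h _

theorem isHermitian_patternPart [AddMonoid α] [StarAddMonoid α] {A : Matrix n n α}
    (hA : A.IsHermitian) {P : Set (n × n)} (hP : ∀ i j, (i, j) ∈ P → (j, i) ∈ P) :
    (patternPart P A).IsHermitian := by
  refine IsHermitian.ext fun i j => ?_
  by_cases h : (i, j) ∈ P
  · rw [patternPart_apply_of_mem h, patternPart_apply_of_mem (hP i j h), hA.apply]
  · rw [patternPart_apply_of_notMem h, patternPart_apply_of_notMem (mt (hP j i) h), star_zero]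

theorem posDef_patternPart_of_offDiag_nonpos [CommRing α] [LinearOrder α] [IsOrderedRing α]
    [StarRing α] [TrivialStar α] {A : Matrix n n α} (hA : A.PosDef)
    (hoff : ∀ i j, i ≠ j → A i j ≤ 0) {P : Set (n × n)}
    (hPsymm : ∀ i j, (i, j) ∈ P → (j, i) ∈ P) (hPdiag : ∀ i, (i, i) ∈ P) :
    (patternPart P A).PosDef := by
  refine posDef_of_abs_le_neg_of_posDef hA (isHermitian_patternPart hA.isHermitian hPsymm)
    (fun i => (patternPart_apply_of_mem (hPdiag i) A).ge) fun i j hij => ?_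
  by_cases h : (i, j) ∈ P
  · rw [patternPart_apply_of_mem h, abs_of_nonpos (hoff i j hij)]
  · rw [patternPart_apply_of_notMem h, abs_zero]
    exact neg_nonneg.mpr (hoff i j hij)

end PatternPart

section Frobenius

open scoped Matrix.Norms.Frobenius

variable {m n α β : Type*} [Fintype m] [Fintype n] [SeminormedAddCommGroup α]
  [SeminormedAddCommGroup β]

theorem frobenius_norm_le_frobenius_norm {A : Matrix m n α} {B : Matrix m n β}
    (h : ∀ i j, ‖A i j‖ ≤ ‖B i j‖) : ‖A‖ ≤ ‖B‖ := by
  rw [frobenius_norm_def, frobenius_norm_def]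
  gcongr with i _ j _
  exact h i j

theorem frobenius_norm_patternPart_sub_le {P : Set (m × n)} {X : Matrix m n α}
    (hX : ∀ i j, (i, j) ∉ P → X i j = 0) (A : Matrix m n α) :
    ‖patternPart P A - A‖ ≤ ‖X - A‖ := by
  refine frobenius_norm_le_frobenius_norm fun i j => ?_
  rw [Matrix.sub_apply, Matrix.sub_apply]
  by_cases h : (i, j) ∈ P
  · rw [patternPart_apply_of_mem h, sub_self, norm_zero]
    exact norm_nonneg _
  · rw [patternPart_apply_of_notMem h, hX i j h]

theorem frobNorm_eq_frobenius_norm {p : ℕ} (A : Matrix (Fin p) (Fin p) ℝ) : frobNorm A = ‖A‖ := by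
  simp [frobNorm, frobenius_norm_def, Real.sqrt_eq_rpow]

theorem projection_of_M_matrix_on_sparsity_pattern_general {K : Matrix n n ℝ} (hK : K.PosDef)
    (hKoff : ∀ i j, i ≠ j → K i j ≤ 0) {P : Set (n × n)}
    (hPsymm : ∀ i j, (i, j) ∈ P → (j, i) ∈ P) (hPdiag : ∀ i, (i, i) ∈ P) :
    (patternPart P K).PosDef ∧
      ∀ X : Matrix n n ℝ, (∀ i j, (i, j) ∉ P → X i j = 0) → ‖patternPart P K - K‖ ≤ ‖X - K‖ :=
  ⟨posDef_patternPart_of_offDiag_nonpos hK hKoff hPsymm hPdiag,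
    fun _ hX => frobenius_norm_patternPart_sub_le hX K⟩

end Frobenius

theorem projection_of_M_matrix_on_sparsity_pattern
    (p : ℕ) (K : Matrix (Fin p) (Fin p) ℝ)
    (hKsymm : Kᵀ = K) (hKpd : K.PosDef)
    (hKoff : ∀ i j, i ≠ j → K i j ≤ 0)
    (P : Set (Fin p × Fin p)) [DecidablePred (· ∈ P)]
    (hPsymm : ∀ i j, (i, j) ∈ P → (j, i) ∈ P)
    (hPdiag : ∀ i, (i, i) ∈ P)
    (PK : Matrix (Fin p) (Fin p) ℝ)
    (hPK : ∀ i j, PK i j = if (i, j) ∈ P then K i j else 0) :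
    PK.PosDef ∧
      ∀ X : Matrix (Fin p) (Fin p) ℝ, X.PosSemidef →
        (∀ i j, (i, j) ∉ P → X i j = 0) →
        frobNorm (PK - K) ≤ frobNorm (X - K) := by
  obtain rfl : PK = patternPart P K := by ext i j; rw [hPK, patternPart_apply]
  simpa only [frobNorm_eq_frobenius_norm] using
    (projection_of_M_matrix_on_sparsity_pattern_general hKpd hKoff hPsymm hPdiag).imp_right
      fun hmin X _ hX => hmin X hX
end

section
/- Let n, m ≥ 1, let H ∈ ℝ^{(n+m)×(n+m)} be symmetric positive semidefinite, let α ∈ (0,1) and κ_M > 0, let B ∈ ℝ^{(n+m)×n} be the block matrix with I_n on top and the m×n zero matrix below, let R = κ_M·I_n, and define L̂ = α·(α BᵀHB + R)^{-1} BᵀH ∈ ℝ^{n×(n+m)}. Then every complex eigenvalue of the matrix I_{n+m} − B·L̂ is real and lies in the half-open interval (0, 1]; in particular the closed-loop dynamics z⁺ = (I_{n+m} − B·L̂) z are marginally stable. -/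
open Matrix

/-- The block matrix with `I_n` on top and the `m × n` zero matrix below. -/
def Bmat (n m : ℕ) : Matrix (Fin n ⊕ Fin m) (Fin n) ℝ :=
  Matrix.of fun p j =>
    match p with
    | Sum.inl i => if i = j then (1 : ℝ) else 0
    | Sum.inr _ => 0

/-!
The nonzero eigenvalues of `B * L` are those of `L * B`. With `G = Bᴴ * H * B` positive semidefinite
and `R` positive definite, the gain `L = (G + R)⁻¹ * Bᴴ * H` gives `L * B = (G + R)⁻¹ * G`, and
pairing `G v = μ (G + R) v` with `v` yields `μ = g / (g + r)`, where `g = v⋆ G v ≥ 0` and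
`r = v⋆ R v > 0`. So `L * B` has its eigenvalues in `[0, 1)`, and `1 - B * L` in `(0, 1]`.
-/

open scoped ComplexOrder

section Field

variable {K : Type*} [Field K] {m n : Type*} [Fintype m] [DecidableEq m] [Fintype n]
  [DecidableEq n]

theorem mem_spectrum_iff_exists_mulVec_eq_smul {A : Matrix n n K} {μ : K} :
    μ ∈ spectrum K A ↔ ∃ v ≠ 0, A *ᵥ v = μ • v := by
  rw [← spectrum_toLin', ← Module.End.hasEigenvalue_iff_mem_spectrum]
  constructor
  · intro hμ
    obtain ⟨v, hv⟩ := hμ.exists_hasEigenvector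
    exact ⟨v, hv.2, hv.apply_eq_smul⟩
  · rintro ⟨v, hv, hAv⟩
    exact Module.End.hasEigenvalue_of_hasEigenvector
      ⟨Module.End.mem_eigenspace_iff.mpr hAv, hv⟩

theorem mem_spectrum_mul_comm_of_ne_zero (A : Matrix m n K) (B : Matrix n m K) {μ : K}
    (hμ : μ ≠ 0) : μ ∈ spectrum K (A * B) ↔ μ ∈ spectrum K (B * A) := by
  have h := congrArg (Polynomial.eval μ) (charpoly_mul_comm' A B)
  simp only [Polynomial.eval_mul, Polynomial.eval_pow, Polynomial.eval_X] at h
  rw [mem_spectrum_iff_isRoot_charpoly, mem_spectrum_iff_isRoot_charpoly, Polynomial.IsRoot.def,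
    Polynomial.IsRoot.def, ← mul_eq_zero_iff_left (pow_ne_zero (Fintype.card n) hμ), h,
    mul_eq_zero_iff_left (pow_ne_zero _ hμ)]

theorem matrix_map_inv {F : Type*} [Field F] (f : K →+* F) (A : Matrix n n K) :
    A⁻¹.map f = (A.map f)⁻¹ := by
  rw [← f.mapMatrix_apply, ← f.mapMatrix_apply, inv_def, inv_def, Ring.inverse_eq_inv',
    Ring.inverse_eq_inv', ← f.map_det, ← f.map_adjugate, ← map_inv₀]
  ext i j
  simp

end Field

section RCLike

variable {𝕜 : Type*} [RCLike 𝕜] {p n : Type*}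

theorem conjTranspose_map_algebraMap (A : Matrix p n ℝ) :
    (A.map (algebraMap ℝ 𝕜))ᴴ = Aᴴ.map (algebraMap ℝ 𝕜) :=
  (conjTranspose_map (algebraMap ℝ 𝕜) fun _ => (RCLike.conj_ofReal _).symm).symm

open scoped MatrixOrder in
theorem posSemidef_map_algebraMap [Finite n] {A : Matrix n n ℝ} (hA : A.PosSemidef) :
    (A.map (algebraMap ℝ 𝕜)).PosSemidef := by
  classical
  have := Fintype.ofFinite n
  have hsqrt : (CFC.sqrt A)ᴴ * CFC.sqrt A = A := by
    rw [(nonneg_iff_posSemidef.mp (CFC.sqrt_nonneg A)).isHermitian.eq,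
      CFC.sqrt_mul_sqrt_self A hA.nonneg]
  rw [← hsqrt, Matrix.map_mul, ← conjTranspose_map_algebraMap]
  exact posSemidef_conjTranspose_mul_self _

theorem posDef_map_algebraMap [Finite n] {A : Matrix n n ℝ} (hA : A.PosDef) :
    (A.map (algebraMap ℝ 𝕜)).PosDef := by
  classical
  have := Fintype.ofFinite n
  exact (posSemidef_map_algebraMap hA.posSemidef).posDef_iff_isUnit.mpr
    (hA.isUnit.map (algebraMap ℝ 𝕜).mapMatrix)

variable [Fintype p] [Fintype n] [DecidableEq n]

theorem spectrum_inv_add_mul_subset_Ico {G R : Matrix n n 𝕜} (hG : G.PosSemidef)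
    (hR : R.PosDef) : spectrum 𝕜 ((G + R)⁻¹ * G) ⊆ Set.Ico 0 1 := by
  intro μ hμ
  obtain ⟨v, hv, hμv⟩ := mem_spectrum_iff_exists_mulVec_eq_smul.mp hμ
  have hGR : IsUnit (G + R).det :=
    (isUnit_iff_isUnit_det _).mp (hR.posSemidef_add hG).isUnit
  have hGv : G *ᵥ v = μ • ((G + R) *ᵥ v) := by
    rw [← mulVec_smul, ← hμv, mulVec_mulVec, mul_nonsing_inv_cancel_left _ _ hGR]
  have hg : 0 ≤ star v ⬝ᵥ (G *ᵥ v) := hG.dotProduct_mulVec_nonneg v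
  have hr : 0 < star v ⬝ᵥ (R *ᵥ v) := hR.dotProduct_mulVec_pos hv
  set g := star v ⬝ᵥ (G *ᵥ v) with hg_def
  set r := star v ⬝ᵥ (R *ᵥ v)
  have hgr : 0 < g + r := add_pos_of_nonneg_of_pos hg hr
  have hμ_eq : μ = g / (g + r) := by
    rw [eq_div_iff hgr.ne', hg_def, ← dotProduct_add, ← add_mulVec, ← smul_eq_mul,
      ← dotProduct_smul, ← hGv]
  rw [hμ_eq]
  exact ⟨div_nonneg hg hgr.le, (div_lt_one hgr).mpr (lt_add_of_pos_right g hr)⟩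

/-- The gain `L` of the feedback law `u = -L z` that minimises `(z + B u)ᴴ H (z + B u) + uᴴ R u` for
positive semidefinite `H` and positive definite `R`. The paper's `L̂` has `α • H` in place of `H`.
If `Bᴴ * H * B + R` is singular, its inverse, and so the gain, is zero. -/
noncomputable def regularizedGain (H : Matrix p p 𝕜) (B : Matrix p n 𝕜) (R : Matrix n n 𝕜) :
    Matrix n p 𝕜 :=
  (Bᴴ * H * B + R)⁻¹ * (Bᴴ * H)

theorem regularizedGain_map_algebraMap (H : Matrix p p ℝ) (B : Matrix p n ℝ)
    (R : Matrix n n ℝ) :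
    (regularizedGain H B R).map (algebraMap ℝ 𝕜) =
      regularizedGain (H.map (algebraMap ℝ 𝕜)) (B.map (algebraMap ℝ 𝕜))
        (R.map (algebraMap ℝ 𝕜)) := by
  simp only [regularizedGain, Matrix.map_mul, matrix_map_inv, Matrix.map_add _ (map_add _),
    conjTranspose_map_algebraMap]

theorem spectrum_one_sub_mul_regularizedGain_subset_Ioc [DecidableEq p] {H : Matrix p p 𝕜}
    (hH : H.PosSemidef) (B : Matrix p n 𝕜) {R : Matrix n n 𝕜} (hR : R.PosDef) :
    spectrum 𝕜 (1 - B * regularizedGain H B R) ⊆ Set.Ioc 0 1 := by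
  intro μ hμ
  rw [← map_one (algebraMap 𝕜 _), ← spectrum.singleton_sub_eq, Set.singleton_sub] at hμ
  obtain ⟨ν, hν, rfl⟩ := hμ
  suffices hν_mem : ν ∈ Set.Ico 0 1 from ⟨sub_pos.mpr hν_mem.2, sub_le_self 1 hν_mem.1⟩
  rcases eq_or_ne ν 0 with rfl | hν0
  · exact ⟨le_rfl, zero_lt_one⟩
  · rw [mem_spectrum_mul_comm_of_ne_zero _ _ hν0, regularizedGain, Matrix.mul_assoc] at hν
    exact spectrum_inv_add_mul_subset_Ico (hH.conjTranspose_mul_mul_same B) hR hν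

end RCLike

theorem closed_loop_marginally_stable_general {p n : Type*} [Fintype p] [DecidableEq p]
    [Fintype n] [DecidableEq n] (B : Matrix p n ℝ) {H : Matrix p p ℝ} (hH : H.PosSemidef)
    {R : Matrix n n ℝ} (hR : R.PosDef) {α : ℝ} (hα : 0 ≤ α) {Lhat : Matrix n p ℝ}
    (hLhat : Lhat = α • ((α • (Bᵀ * H * B) + R)⁻¹ * (Bᵀ * H))) :
    ∀ μ ∈ spectrum ℂ (((1 : Matrix p p ℝ) - B * Lhat).map (algebraMap ℝ ℂ)),
      μ.im = 0 ∧ μ.re ∈ Set.Ioc (0 : ℝ) 1 := by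
  intro μ hμ
  have hgain : Lhat = regularizedGain (α • H) B R := by
    rw [hLhat, regularizedGain, conjTranspose_eq_transpose_of_trivial, Matrix.mul_smul,
      Matrix.mul_smul, Matrix.smul_mul]
  rw [hgain, Matrix.map_sub _ (map_sub _), Matrix.map_mul, regularizedGain_map_algebraMap,
    Matrix.map_one _ (map_zero _) (map_one _)] at hμ
  obtain ⟨hpos, hle⟩ := spectrum_one_sub_mul_regularizedGain_subset_Ioc
    (posSemidef_map_algebraMap (hH.smul hα)) _ (posDef_map_algebraMap hR) hμ
  exact ⟨(Complex.pos_iff.mp hpos).2.symm, (Complex.pos_iff.mp hpos).1,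
    (Complex.le_def.mp hle).1⟩

theorem closed_loop_marginally_stable
    (n m : ℕ) (hn : 0 < n) (hm : 0 < m)
    (H : Matrix (Fin n ⊕ Fin m) (Fin n ⊕ Fin m) ℝ) (hH : H.PosSemidef)
    (α : ℝ) (hα : α ∈ Set.Ioo (0 : ℝ) 1) (κM : ℝ) (hκM : 0 < κM)
    (Lhat : Matrix (Fin n) (Fin n ⊕ Fin m) ℝ)
    (hLhat : Lhat = α •
      ((α • ((Bmat n m)ᵀ * H * Bmat n m) + κM • (1 : Matrix (Fin n) (Fin n) ℝ))⁻¹ *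
        ((Bmat n m)ᵀ * H))) :
    ∀ μ ∈ spectrum ℂ
        (((1 : Matrix (Fin n ⊕ Fin m) (Fin n ⊕ Fin m) ℝ) - Bmat n m * Lhat).map
          (algebraMap ℝ ℂ)),
      μ.im = 0 ∧ μ.re ∈ Set.Ioc (0 : ℝ) 1 :=
  closed_loop_marginally_stable_general (Bmat n m) hH (PosDef.one.smul hκM) hα.1.le hLhat
end

section
/- Let S be a nonempty set and let α ∈ (0,1). Equip the bounded real-valued functions on S with the supremum distance d(J, J') = sup_{z ∈ S} |J(z) − J'(z)|. Let T_μ be a map from bounded functions on S to bounded functions on S that is α-Lipschitz with respect to d, i.e. d(T_μ J, T_μ J') ≤ α·d(J, J') for all bounded J, J'. Let J*, J̃ and J^μ be bounded functions on S, let ε ≥ 0, and suppose that: (i) J^μ is a fixed point of T_μ, i.e. T_μ J^μ = J^μ; (ii) d(J̃, J*) ≤ ε; and (iii) d(T_μ J̃, J*) ≤ α·ε. Then d(J^μ, J*) ≤ 2αε/(1−α). -/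
/-- The type of bounded real-valued functions on `S`. -/
def BddFun (S : Type*) : Type _ := {f : S → ℝ // ∃ C : ℝ, ∀ z : S, |f z| ≤ C}

/-- The supremum distance between two bounded functions on `S`. -/
noncomputable def supDist {S : Type*} (J J' : BddFun S) : ℝ :=
  ⨆ z : S, |J.1 z - J'.1 z|

/-!
Compare the fixed point `x` with `T y`, the update of the approximation `y`, rather than with `y`
itself. Since `x = T x`, contraction gives
`dist x z ≤ dist (T x) (T y) + dist (T y) z ≤ α * (dist x z + dist y z) + dist (T y) z`,
and the term `α * dist x z` is absorbed into the left-hand side because `α < 1`.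
-/

section FixedPoint

open Function

variable {X : Type*} [PseudoMetricSpace X] {T : X → X} {α ε : ℝ} {x y z : X}

theorem dist_le_div_of_isFixedPt_of_dist_map_le (hα₀ : 0 ≤ α) (hα₁ : α < 1)
    (hx : IsFixedPt T x) (hT : dist (T x) (T y) ≤ α * dist x y) (z : X) :
    dist x z ≤ (dist (T y) z + α * dist y z) / (1 - α) := by
  have absorb : dist x z ≤ α * (dist x z + dist y z) + dist (T y) z :=
    calc
      dist x z = dist (T x) z := by rw [hx.eq]
      _ ≤ dist (T x) (T y) + dist (T y) z := dist_triangle _ _ _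
      _ ≤ α * dist x y + dist (T y) z := by gcongr
      _ ≤ α * (dist x z + dist y z) + dist (T y) z := by
        gcongr
        exact dist_triangle_right x y z
  rw [le_div_iff₀ (sub_pos.2 hα₁)]
  linarith

theorem approx_policy_performance_bound_general (hα₀ : 0 ≤ α) (hα₁ : α < 1)
    (hT : ∀ w, dist (T x) (T w) ≤ α * dist x w) (hx : IsFixedPt T x)
    (hy : dist y z ≤ ε) (hTy : dist (T y) z ≤ α * ε) :
    dist x z ≤ 2 * α * ε / (1 - α) :=
  have : 0 < 1 - α := sub_pos.2 hα₁
  calc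
    dist x z ≤ (dist (T y) z + α * dist y z) / (1 - α) :=
      dist_le_div_of_isFixedPt_of_dist_map_le hα₀ hα₁ hx (hT y) z
    _ ≤ (α * ε + α * ε) / (1 - α) := by gcongr
    _ = 2 * α * ε / (1 - α) := by ring

end FixedPoint

section SupDist

variable {S : Type*}

theorem bddAbove_range_abs_sub (J K : BddFun S) :
    BddAbove (Set.range fun z => |J.1 z - K.1 z|) := by
  obtain ⟨C, hC⟩ := J.2
  obtain ⟨D, hD⟩ := K.2
  refine ⟨C + D, Set.forall_mem_range.2 fun z => ?_⟩
  exact (abs_sub _ _).trans (add_le_add (hC z) (hD z))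

theorem abs_sub_le_supDist (J K : BddFun S) (z : S) : |J.1 z - K.1 z| ≤ supDist J K :=
  le_ciSup (bddAbove_range_abs_sub J K) z

theorem supDist_nonneg (J K : BddFun S) : 0 ≤ supDist J K :=
  Real.iSup_nonneg fun _ => abs_nonneg _

theorem supDist_self (J : BddFun S) : supDist J J = 0 := by
  simp [supDist]

theorem supDist_comm (J K : BddFun S) : supDist J K = supDist K J := by
  simp only [supDist, abs_sub_comm]

theorem supDist_triangle (J K L : BddFun S) : supDist J L ≤ supDist J K + supDist K L := by
  refine Real.iSup_le (fun z => ?_) (add_nonneg (supDist_nonneg J K) (supDist_nonneg K L))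
  calc
    |J.1 z - L.1 z| ≤ |J.1 z - K.1 z| + |K.1 z - L.1 z| := abs_sub_le _ _ _
    _ ≤ supDist J K + supDist K L :=
      add_le_add (abs_sub_le_supDist J K z) (abs_sub_le_supDist K L z)

theorem eq_of_supDist_eq_zero {J K : BddFun S} (h : supDist J K = 0) : J = K :=
  Subtype.ext <| funext fun z =>
    eq_of_abs_sub_nonpos ((abs_sub_le_supDist J K z).trans h.le)

/-- The metric space of bounded functions on `S`, with `dist` definitionally equal to `supDist`.
If `S` is empty, the supremum is the junk value `0`, which is the right distance on the resulting
one-point space. -/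
noncomputable instance BddFun.instMetricSpace : MetricSpace (BddFun S) where
  dist := supDist
  dist_self := supDist_self
  dist_comm := supDist_comm
  dist_triangle := supDist_triangle
  eq_of_dist_eq_zero := eq_of_supDist_eq_zero

end SupDist

theorem approx_policy_performance_bound
    (S : Type*) [Nonempty S] (α : ℝ) (hα : α ∈ Set.Ioo (0 : ℝ) 1)
    (Tμ : BddFun S → BddFun S)
    (hLip : ∀ J J' : BddFun S, supDist (Tμ J) (Tμ J') ≤ α * supDist J J')
    (Jstar Jtilde Jμ : BddFun S) (ε : ℝ) (hε : 0 ≤ ε)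
    (hfix : Tμ Jμ = Jμ)
    (h2 : supDist Jtilde Jstar ≤ ε)
    (h3 : supDist (Tμ Jtilde) Jstar ≤ α * ε) :
    supDist Jμ Jstar ≤ 2 * α * ε / (1 - α) :=
  approx_policy_performance_bound_general hα.1.le hα.2 (hLip Jμ) hfix h2 h3
end

section
/- Let K be a symmetric positive semidefinite matrix in ℝ^{(n+m)×(n+m)} satisfying the discounted algebraic Riccati equation K = αK − α²·K B (α BᵀKB + R)^{-1} BᵀK + Q, where Q is symmetric. Set k = (1/κ_M)·BᵀKB and q = (1/κ_M)·BᵀQB in ℝ^{n×n}. Then q·(α·k + I_n) = α·k² + (1−α)·k. -/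
open Matrix

/-!
With `P = C K B` and `S = α P + κ`, multiplying the Riccati equation by `C` on the left and `B` on
the right gives `C Q B = (1 - α) P + α² P S⁻¹ P`. Since `S` is a polynomial in `P`, it commutes with
`P`, so multiplying by `S` on the right clears the inverse: `C Q B S = (1 - α) P S + α² P²`. This
is the quadratic identity up to the factor `κ²`. For `C = Bᵀ` and `K` positive semidefinite, `S` is
positive definite, hence invertible.
-/

theorem commute_smul_add_smul_one {R A : Type*} [CommSemiring R] [Semiring A] [Algebra R A]
    (a : A) (α κ : R) : Commute a (α • a + κ • 1) :=
  ((Commute.refl a).smul_right α).add_right ((Commute.one_right a).smul_right κ)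

section CommRing

variable {ι ν R : Type*} [Fintype ν] [CommRing R]

theorem mul_inv_mul_mul_of_commute [DecidableEq ν] (A : Matrix ι ν R) {P S : Matrix ν ν R}
    (hPS : Commute P S) (hS : IsUnit S) : A * S⁻¹ * P * S = A * P := by
  rw [Matrix.mul_assoc, hPS.eq, ← Matrix.mul_assoc,
    nonsing_inv_mul_cancel_right S A ((isUnit_iff_isUnit_det S).1 hS)]

variable [Fintype ι]

theorem mul_mul_eq_of_riccati {α : R} {K Q : Matrix ι ι R} {B : Matrix ι ν R}
    {C : Matrix ν ι R} {T : Matrix ν ν R}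
    (hRic : K = α • K - α ^ 2 • (K * B * T * C * K) + Q) :
    C * Q * B = (1 - α) • (C * K * B) + α ^ 2 • (C * K * B * T * (C * K * B)) := by
  have hQ : Q = (1 - α) • K + α ^ 2 • (K * B * T * C * K) := by
    rw [eq_sub_of_add_eq' hRic.symm]
    module
  rw [hQ]
  simp only [Matrix.mul_add, Matrix.add_mul, Matrix.mul_smul, Matrix.smul_mul, Matrix.mul_assoc]

theorem mul_mul_mul_smul_add_eq_of_riccati [DecidableEq ν] {α κ : R} {K Q : Matrix ι ι R}
    {B : Matrix ι ν R} {C : Matrix ν ι R}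
    (hS : IsUnit (α • (C * K * B) + κ • (1 : Matrix ν ν R)))
    (hRic : K = α • K - α ^ 2 • (K * B * (α • (C * K * B) + κ • 1)⁻¹ * C * K) + Q) :
    C * Q * B * (α • (C * K * B) + κ • 1) =
      α • (C * K * B) ^ 2 + ((1 - α) * κ) • (C * K * B) := by
  have hQ := mul_mul_eq_of_riccati hRic
  set P := C * K * B
  set S := α • P + κ • (1 : Matrix ν ν R) with hS_def
  calc C * Q * B * S
      = (1 - α) • (P * S) + α ^ 2 • (P * S⁻¹ * P * S) := by
        rw [hQ, add_mul, smul_mul_assoc, smul_mul_assoc]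
    _ = (1 - α) • (α • P ^ 2 + κ • P) + α ^ 2 • P ^ 2 := by
        rw [mul_inv_mul_mul_of_commute P (commute_smul_add_smul_one P α κ) hS, hS_def,
          mul_add, mul_smul_comm, mul_smul_comm, mul_one, ← sq]
    _ = α • P ^ 2 + ((1 - α) * κ) • P := by module

end CommRing

theorem posDef_smul_add_smul_one {ν R : Type*} [DecidableEq ν] [CommRing R] [NoZeroDivisors R]
    [PartialOrder R] [StarRing R] [StarOrderedRing R] [PosMulStrictMono R] {P : Matrix ν ν R}
    (hP : P.PosSemidef) {α κ : R} (hα : 0 ≤ α) (hκ : 0 < κ) : (α • P + κ • 1).PosDef :=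
  PosDef.posSemidef_add (hP.smul hα) (PosDef.one.smul hκ)

theorem riccati_top_block_quadratic_identity_general {ι ν F : Type*} [Fintype ι] [Fintype ν]
    [DecidableEq ν] [Field F] {α κM : F} (hκM : κM ≠ 0) {K Q : Matrix ι ι F} {B : Matrix ι ν F}
    {C : Matrix ν ι F} (hS : IsUnit (α • (C * K * B) + κM • (1 : Matrix ν ν F)))
    (hRic : K = α • K - α ^ 2 • (K * B * (α • (C * K * B) + κM • 1)⁻¹ * C * K) + Q)
    {k q : Matrix ν ν F} (hk : k = κM⁻¹ • (C * K * B)) (hq : q = κM⁻¹ • (C * Q * B)) :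
    q * (α • k + 1) = α • k ^ 2 + (1 - α) • k := by
  have hscale : α • k + 1 = κM⁻¹ • (α • (C * K * B) + κM • 1) := by
    rw [hk, smul_add, inv_smul_smul₀ hκM, smul_comm]
  rw [hscale, hq, smul_mul_smul_comm, mul_mul_mul_smul_add_eq_of_riccati hS hRic, hk, smul_pow]
  match_scalars <;> field_simp

theorem riccati_top_block_quadratic_identity
    (n m : ℕ) (hn : 0 < n) (hm : 0 < m)
    (α : ℝ) (hα : α ∈ Set.Ioo (0 : ℝ) 1) (κM : ℝ) (hκM : 0 < κM)
    (Q K : Matrix (Fin n ⊕ Fin m) (Fin n ⊕ Fin m) ℝ)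
    (hQsymm : Qᵀ = Q) (hKsymm : Kᵀ = K) (hKpsd : K.PosSemidef)
    (hRic : K = α • K -
      α ^ 2 • (K * Bmat n m *
        (α • ((Bmat n m)ᵀ * K * Bmat n m) + κM • (1 : Matrix (Fin n) (Fin n) ℝ))⁻¹ *
        (Bmat n m)ᵀ * K) + Q)
    (k q : Matrix (Fin n) (Fin n) ℝ)
    (hk : k = κM⁻¹ • ((Bmat n m)ᵀ * K * Bmat n m))
    (hq : q = κM⁻¹ • ((Bmat n m)ᵀ * Q * Bmat n m)) :
    q * (α • k + 1) = α • k ^ 2 + (1 - α) • k := by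
  have hP : ((Bmat n m)ᵀ * K * Bmat n m).PosSemidef := by
    simpa only [conjTranspose_eq_transpose_of_trivial] using
      hKpsd.conjTranspose_mul_mul_same (Bmat n m)
  exact riccati_top_block_quadratic_identity_general hκM.ne'
    (posDef_smul_add_smul_one hP hα.1.le hκM).isUnit hRic hk hq
end

section
/- Let K_f ∈ ℝ^{n×n} be a symmetric positive definite matrix whose off-diagonal entries are all nonpositive, let α ∈ (0,1) and κ_M > 0, and define M = (1−α)·I_n + α²·K_f·(α·K_f + κ_M·I_n)^{-1}. Then M is invertible and its inverse M^{-1} is entrywise nonnegative. (Equivalently, M = I_n − α·κ_M·(α·K_f + κ_M·I_n)^{-1} is a nonsingular M-matrix.) -/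
open Matrix

/-! With `c = α * κM`, the matrix `B = α • Kf + κM • 1` turns `M` into `1 - c • B⁻¹`, because
`α • Kf = B - κM • 1`. Writing `B = C + c • 1`, i.e. `C = α • Kf + ((1 - α) * κM) • 1`, one finds
`M⁻¹ = 1 + c • C⁻¹`, so it suffices that `C⁻¹` be nonnegative. Since `C` has nonpositive
off-diagonal entries and a positive quadratic form, this follows by testing `0 ≤ C *ᵥ x` against
the negative part of `x`. -/

variable {ι R : Type*}

/-- A Z-matrix: all off-diagonal entries are nonpositive. The diagonal is unconstrained. -/
def IsZMatrix [Zero R] [LE R] (A : Matrix ι ι R) : Prop :=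
  ∀ i j, i ≠ j → A i j ≤ 0

/-- A monotone matrix in the sense of Collatz: `A *ᵥ x` is entrywise nonnegative only if `x` is.
Over an ordered field this amounts to `A` having a nonnegative inverse, but it can be checked
without knowing beforehand that `A` is invertible. -/
def IsMonotoneMatrix [Fintype ι] [NonUnitalNonAssocSemiring R] [LE R] (A : Matrix ι ι R) : Prop :=
  ∀ x : ι → R, 0 ≤ A *ᵥ x → 0 ≤ x

variable [Fintype ι]

namespace IsZMatrix

section Ring

variable [Ring R] [LinearOrder R] [IsOrderedRing R] {A : Matrix ι ι R}

theorem negPart_dotProduct_mulVec_posPart_nonpos (hA : IsZMatrix A) (x : ι → R) :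
    x⁻ ⬝ᵥ A *ᵥ x⁺ ≤ 0 := by
  simp only [dotProduct, mulVec, Finset.mul_sum, Pi.negPart_apply, Pi.posPart_apply]
  refine Finset.sum_nonpos fun i _ => Finset.sum_nonpos fun j _ => ?_
  obtain rfl | hij := eq_or_ne i j
  · rcases le_total 0 (x i) with h | h
    · simp [negPart_eq_zero.2 h]
    · simp [posPart_eq_zero.2 h]
  · exact mul_nonpos_of_nonneg_of_nonpos (negPart_nonneg _)
      (mul_nonpos_of_nonpos_of_nonneg (hA i j hij) (posPart_nonneg _))

theorem isMonotoneMatrix (hA : IsZMatrix A) (hpos : ∀ x ≠ 0, 0 < x ⬝ᵥ A *ᵥ x) :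
    IsMonotoneMatrix A := by
  intro x hx
  rw [← negPart_eq_zero]
  by_contra hne
  refine (hpos x⁻ hne).not_ge ?_
  have hsplit : A *ᵥ x = A *ᵥ x⁺ - A *ᵥ x⁻ := by rw [← mulVec_sub, posPart_sub_negPart]
  calc x⁻ ⬝ᵥ A *ᵥ x⁻ = x⁻ ⬝ᵥ A *ᵥ x⁺ - x⁻ ⬝ᵥ A *ᵥ x := by
        rw [hsplit, dotProduct_sub, sub_sub_cancel]
    _ ≤ 0 := sub_nonpos.2 <| (hA.negPart_dotProduct_mulVec_posPart_nonpos x).trans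
        (dotProduct_nonneg_of_nonneg (negPart_nonneg x) hx)

end Ring

section CommRing

variable [CommRing R] [LinearOrder R] [IsStrictOrderedRing R] [DecidableEq ι]

theorem isMonotoneMatrix_smul_add_smul_one {K : Matrix ι ι R} (hK : IsZMatrix K)
    (hnonneg : ∀ x, 0 ≤ x ⬝ᵥ K *ᵥ x) {α c : R} (hα : 0 ≤ α) (hc : 0 < c) :
    IsMonotoneMatrix (α • K + c • 1) := by
  have hZ : IsZMatrix (α • K + c • 1) := fun i j hij => by
    simpa [one_apply_ne hij] using mul_nonpos_of_nonneg_of_nonpos hα (hK i j hij)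
  refine hZ.isMonotoneMatrix fun x hx => ?_
  have hxx : 0 < x ⬝ᵥ x :=
    (Finset.sum_nonneg fun i _ => mul_self_nonneg (x i)).lt_of_ne'
      (dotProduct_self_eq_zero.not.2 hx)
  simpa [add_mulVec, smul_mulVec] using
    add_pos_of_nonneg_of_pos (mul_nonneg hα (hnonneg x)) (mul_pos hc hxx)

end CommRing

end IsZMatrix

variable [DecidableEq ι]

namespace IsMonotoneMatrix

variable [Field R] [PartialOrder R] [IsOrderedRing R] {A : Matrix ι ι R}

theorem isUnit (hA : IsMonotoneMatrix A) : IsUnit A := by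
  refine mulVec_injective_iff_isUnit.1 fun x y (hxy : A *ᵥ x = A *ᵥ y) => ?_
  have le_of_mulVec_eq {u v : ι → R} (h : A *ᵥ u = A *ᵥ v) : u ≤ v :=
    sub_nonneg.1 <| hA _ <| by rw [mulVec_sub, h, sub_self]
  exact (le_of_mulVec_eq hxy).antisymm (le_of_mulVec_eq hxy.symm)

theorem inv_nonneg (hA : IsMonotoneMatrix A) (i j : ι) : 0 ≤ A⁻¹ i j := by
  have hcol : A *ᵥ A⁻¹.col j = Pi.single j 1 := by
    rw [← mulVec_single_one, mulVec_mulVec,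
      mul_nonsing_inv _ ((isUnit_iff_isUnit_det _).1 hA.isUnit), one_mulVec]
  exact hA (A⁻¹.col j) (hcol ▸ Pi.single_nonneg.2 zero_le_one) i

end IsMonotoneMatrix

section CommRing

variable [CommRing R]

theorem one_sub_smul_inv_mul_one_add_smul_inv {A : Matrix ι ι R} {c : R}
    (hA : IsUnit A) (hAc : IsUnit (A + c • 1)) :
    (1 - c • (A + c • 1)⁻¹) * (1 + c • A⁻¹) = 1 := by
  rw [isUnit_iff_isUnit_det] at hA hAc
  have hleft : 1 - c • (A + c • 1)⁻¹ = (A + c • 1)⁻¹ * A := by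
    rw [sub_eq_iff_eq_add]
    simpa [mul_add] using (nonsing_inv_mul _ hAc).symm
  have hright : 1 + c • A⁻¹ = A⁻¹ * (A + c • 1) := by
    simp [mul_add, nonsing_inv_mul _ hA]
  rw [hleft, hright, Matrix.mul_assoc, mul_nonsing_inv_cancel_left _ _ hA, nonsing_inv_mul _ hAc]

theorem one_sub_smul_one_add_sq_smul_mul_inv {K : Matrix ι ι R} {α κ : R}
    (hB : IsUnit (α • K + κ • 1)) :
    (1 - α) • 1 + α ^ 2 • (K * (α • K + κ • 1)⁻¹) = 1 - (α * κ) • (α • K + κ • 1)⁻¹ := by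
  have hKB : α • (K * (α • K + κ • 1)⁻¹) = 1 - κ • (α • K + κ • 1)⁻¹ := by
    rw [eq_sub_iff_add_eq]
    simpa [add_mul] using mul_nonsing_inv _ ((isUnit_iff_isUnit_det _).1 hB)
  rw [sq, mul_smul, hKB]
  module

end CommRing

theorem inverse_nonneg_of_M_matrix_combination_general
    [Field R] [LinearOrder R] [IsStrictOrderedRing R] {K : Matrix ι ι R}
    (hK : IsZMatrix K) (hnonneg : ∀ x, 0 ≤ x ⬝ᵥ K *ᵥ x)
    {α κ : R} (hα : α ∈ Set.Ico 0 1) (hκ : 0 < κ) {M : Matrix ι ι R}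
    (hM : M = (1 - α) • 1 + α ^ 2 • (K * (α • K + κ • 1)⁻¹)) :
    IsUnit M ∧ ∀ i j, 0 ≤ M⁻¹ i j := by
  obtain ⟨hα0, hα1⟩ := hα
  have hB := hK.isMonotoneMatrix_smul_add_smul_one hnonneg hα0 hκ
  have hC := hK.isMonotoneMatrix_smul_add_smul_one hnonneg hα0 (mul_pos (sub_pos.2 hα1) hκ)
  set C := α • K + ((1 - α) * κ) • (1 : Matrix ι ι R) with hC_def
  have hBC : α • K + κ • 1 = C + (α * κ) • 1 := by rw [hC_def]; module
  have hM_inv : M * (1 + (α * κ) • C⁻¹) = 1 := by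
    rw [hM, one_sub_smul_one_add_sq_smul_mul_inv hB.isUnit, hBC]
    exact one_sub_smul_inv_mul_one_add_smul_inv hC.isUnit (hBC ▸ hB.isUnit)
  refine ⟨.of_mul_eq_one _ hM_inv, fun i j => ?_⟩
  have hone : 0 ≤ (1 : Matrix ι ι R) i j := by
    rw [one_apply]
    split_ifs <;> simp
  rw [inv_eq_right_inv hM_inv]
  exact add_nonneg hone (mul_nonneg (mul_nonneg hα0 hκ.le) (hC.inv_nonneg i j))

theorem inverse_nonneg_of_M_matrix_combination
    (n : ℕ) (Kf : Matrix (Fin n) (Fin n) ℝ)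
    (hKsymm : Kfᵀ = Kf) (hKpd : Kf.PosDef)
    (hKoff : ∀ i j, i ≠ j → Kf i j ≤ 0)
    (α κM : ℝ) (hα : α ∈ Set.Ioo (0 : ℝ) 1) (hκM : 0 < κM)
    (M : Matrix (Fin n) (Fin n) ℝ)
    (hM : M = (1 - α) • (1 : Matrix (Fin n) (Fin n) ℝ) +
      α ^ 2 • (Kf * (α • Kf + κM • (1 : Matrix (Fin n) (Fin n) ℝ))⁻¹)) :
    IsUnit M ∧ ∀ i j, 0 ≤ M⁻¹ i j :=
  inverse_nonneg_of_M_matrix_combination_general hKoff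
    (fun x => by simpa using hKpd.posSemidef.dotProduct_mulVec_nonneg x)
    (Set.Ioo_subset_Ico_self hα) hκM hM
end

section
/- Let A ∈ ℝ^{n×n} be symmetric and diagonally dominant with nonnegative diagonal, i.e. A_{ii} ≥ Σ_{j≠i} |A_{ij}| for every i. Let D ∈ ℝ^{n×n} be diagonal with D_{ii} > 0 and D_{ii}·A_{ii} < 1 for every i. Then every complex eigenvalue of the product D·A is real and lies in the half-open interval [0, 2); consequently every complex eigenvalue of I_n − D·A is real and lies in (−1, 1]. -/
open Matrix

/-!
The product of a positive semidefinite matrix `P = Bᴴ * B` with a Hermitian matrix `H` has the same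
nonzero spectrum as the Hermitian matrix `B * H * Bᴴ`, so its eigenvalues are real. Scaling rows by
nonnegative reals preserves diagonal dominance, and the Gershgorin disc of a diagonally dominant
row with diagonal entry `a` is contained in the disc of centre `a` and radius `re a`, whose real
parts fill `[0, 2 * re a]`.
-/

section General

open scoped ComplexOrder

variable {𝕜 m : Type*} [RCLike 𝕜] [Fintype m] [DecidableEq m]

lemma im_eq_zero_of_mem_spectrum_of_isHermitian {H : Matrix m m 𝕜} (hH : H.IsHermitian)
    {μ : 𝕜} (hμ : μ ∈ spectrum 𝕜 H) : RCLike.im μ = 0 := by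
  rw [hH.spectrum_eq_image_range] at hμ
  obtain ⟨x, -, rfl⟩ := hμ
  exact RCLike.ofReal_im x

lemma im_eq_zero_of_mem_spectrum_posSemidef_mul_isHermitian {P H : Matrix m m 𝕜}
    (hP : P.PosSemidef) (hH : H.IsHermitian) {μ : 𝕜} (hμ : μ ∈ spectrum 𝕜 (P * H)) :
    RCLike.im μ = 0 := by
  rcases eq_or_ne μ 0 with rfl | hμ0
  · exact map_zero _
  obtain ⟨B, rfl⟩ : ∃ B : Matrix m m 𝕜, P = Bᴴ * B := by
    open scoped MatrixOrder in
    exact CStarAlgebra.nonneg_iff_eq_star_mul_self.mp hP.nonneg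
  have hswap : μ ∈ spectrum 𝕜 (B * H * Bᴴ) \ {0} := by
    rw [spectrum.nonzero_mul_comm, ← mul_assoc]
    exact ⟨hμ, hμ0⟩
  exact im_eq_zero_of_mem_spectrum_of_isHermitian (isHermitian_mul_mul_conjTranspose B hH) hswap.1

/-- Weak diagonal dominance by rows together with nonnegativity of the diagonal. Comparing with the
real part of the diagonal entry, rather than with its norm, encodes both conditions at once when the
diagonal is real. -/
def IsDiagDominant (M : Matrix m m 𝕜) : Prop :=
  ∀ i, ∑ j ∈ Finset.univ.erase i, ‖M i j‖ ≤ RCLike.re (M i i)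

lemma IsDiagDominant.diagonal_mul {M : Matrix m m 𝕜} (hM : IsDiagDominant M) {d : m → ℝ}
    (hd : ∀ i, 0 ≤ d i) : IsDiagDominant (diagonal (fun i => (d i : 𝕜)) * M) := by
  intro i
  simp only [Matrix.diagonal_mul, norm_mul, RCLike.norm_ofReal, abs_of_nonneg (hd i),
    RCLike.re_ofReal_mul, ← Finset.mul_sum]
  exact mul_le_mul_of_nonneg_left (hM i) (hd i)

lemma IsDiagDominant.exists_re_mem_Icc_of_mem_spectrum {M : Matrix m m 𝕜}
    (hM : IsDiagDominant M) {μ : 𝕜} (hμ : μ ∈ spectrum 𝕜 M) :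
    ∃ k, RCLike.re μ ∈ Set.Icc 0 (2 * RCLike.re (M k k)) := by
  rw [← spectrum_toLin', ← Module.End.hasEigenvalue_iff_mem_spectrum] at hμ
  obtain ⟨k, hk⟩ := eigenvalue_mem_ball hμ
  have hre : |RCLike.re μ - RCLike.re (M k k)| ≤ RCLike.re (M k k) :=
    calc |RCLike.re μ - RCLike.re (M k k)| = |RCLike.re (μ - M k k)| := by rw [map_sub]
      _ ≤ ‖μ - M k k‖ := RCLike.abs_re_le_norm _
      _ ≤ ∑ j ∈ Finset.univ.erase k, ‖M k j‖ := mem_closedBall_iff_norm.mp hk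
      _ ≤ RCLike.re (M k k) := hM k
  obtain ⟨hlower, hupper⟩ := abs_le.mp hre
  exact ⟨k, by linarith, by linarith⟩

theorem eigenvalues_of_scaled_diagonally_dominant_general {A : Matrix m m 𝕜} {d : m → ℝ}
    (hA : A.IsHermitian) (hdom : IsDiagDominant A) (hd : ∀ i, 0 ≤ d i)
    (hdA : ∀ i, d i * RCLike.re (A i i) < 1) :
    (∀ μ ∈ spectrum 𝕜 (diagonal (fun i => (d i : 𝕜)) * A),
        RCLike.im μ = 0 ∧ RCLike.re μ ∈ Set.Ico (0 : ℝ) 2) ∧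
      (∀ μ ∈ spectrum 𝕜 (1 - diagonal (fun i => (d i : 𝕜)) * A),
        RCLike.im μ = 0 ∧ RCLike.re μ ∈ Set.Ioc (-1 : ℝ) 1) := by
  have hmul : ∀ μ ∈ spectrum 𝕜 (diagonal (fun i => (d i : 𝕜)) * A),
      RCLike.im μ = 0 ∧ RCLike.re μ ∈ Set.Ico (0 : ℝ) 2 := by
    intro μ hμ
    have hpsd : (diagonal (fun i => (d i : 𝕜))).PosSemidef :=
      .diagonal fun i => RCLike.ofReal_nonneg.mpr (hd i)
    obtain ⟨k, hlower, hupper⟩ := (hdom.diagonal_mul hd).exists_re_mem_Icc_of_mem_spectrum hμ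
    rw [diagonal_mul, RCLike.re_ofReal_mul] at hupper
    exact ⟨im_eq_zero_of_mem_spectrum_posSemidef_mul_isHermitian hpsd hA hμ, hlower,
      by linarith [hdA k]⟩
  refine ⟨hmul, fun μ hμ => ?_⟩
  rw [← map_one (algebraMap 𝕜 (Matrix m m 𝕜)), ← spectrum.singleton_sub_eq,
    Set.singleton_sub] at hμ
  obtain ⟨ν, hν, rfl⟩ := hμ
  obtain ⟨him, hlower, hupper⟩ := hmul ν hν
  simp only [map_sub, RCLike.one_im, RCLike.one_re, him, sub_zero, true_and]
  constructor <;> linarith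

end General

theorem eigenvalues_of_scaled_diagonally_dominant
    (n : ℕ) (A D : Matrix (Fin n) (Fin n) ℝ)
    (hAsymm : Aᵀ = A)
    (hDD : ∀ i, ∑ j ∈ Finset.univ.filter (fun j => j ≠ i), |A i j| ≤ A i i)
    (hDdiag : ∀ i j, i ≠ j → D i j = 0)
    (hDpos : ∀ i, 0 < D i i)
    (hDA : ∀ i, D i i * A i i < 1) :
    (∀ μ ∈ spectrum ℂ ((D * A).map (algebraMap ℝ ℂ)),
        μ.im = 0 ∧ μ.re ∈ Set.Ico (0 : ℝ) 2) ∧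
      (∀ μ ∈ spectrum ℂ
          (((1 : Matrix (Fin n) (Fin n) ℝ) - D * A).map (algebraMap ℝ ℂ)),
        μ.im = 0 ∧ μ.re ∈ Set.Ioc (-1 : ℝ) 1) := by
  have hA : (A.map (algebraMap ℝ ℂ)).IsHermitian :=
    IsHermitian.map (by simpa [IsHermitian] using hAsymm) _ fun x => by simp
  have hdom : IsDiagDominant (A.map (algebraMap ℝ ℂ)) := by
    simpa [IsDiagDominant, ← Finset.filter_ne'] using hDD
  have hdiag : D.map (algebraMap ℝ ℂ) = diagonal fun i => (D i i : ℂ) := by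
    ext i j
    rcases eq_or_ne i j with rfl | hij
    · simp
    · simp [hij, hDdiag i j hij]
  rw [Matrix.map_sub _ (map_sub _), Matrix.map_one _ (map_zero _) (map_one _), Matrix.map_mul,
    hdiag]
  exact eigenvalues_of_scaled_diagonally_dominant_general hA hdom (fun i => (hDpos i).le) hDA
end

section
/- Let N, m ≥ 1 and let L ∈ ℝ^{(N+m)×(N+m)} be a weighted graph Laplacian: L is symmetric, L_{ij} ≤ 0 for all i ≠ j, and every row sum of L is zero (so L_{ii} = Σ_{j≠i} |L_{ij}|). Let L_f ∈ ℝ^{N×N} be the top-left N×N block of L and L_{fl} ∈ ℝ^{N×m} the top-right N×m block. Let c > 0 and let D ∈ ℝ^{N×N} be the diagonal matrix with D_{ii} = 1/(c + L_{ii}) for i = 1,…,N. Then every complex eigenvalue of the block matrix with blocks [[I_N − D·L_f, −D·L_{fl}], [0_{m×N}, I_m]] is real and lies in the half-open interval (−1, 1]; in particular the corresponding closed-loop dynamics are marginally stable. -/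
open Matrix

/-!
The closed-loop matrix is `1 - P * L`, where `P` is the diagonal matrix with entries `1 / (c + Lᵢᵢ)`
on the followers and `0` on the leaders. As `P` is positive semidefinite and `L` is symmetric,
`P * L` has the same nonzero eigenvalues as a Hermitian matrix, so its spectrum is real.
As `L` is diagonally dominant, the Gershgorin discs of `P * L` have center `Pᵢᵢ Lᵢᵢ ∈ [0, 1)` and
radius at most `Pᵢᵢ Lᵢᵢ`, so the real parts of its eigenvalues lie in `[0, 2)`.
-/

theorem sum_erase_abs_eq_of_sum_eq_zero {ι α : Type*} [Fintype ι] [DecidableEq ι]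
    [AddCommGroup α] [LinearOrder α] [IsOrderedAddMonoid α] {f : ι → α} {i : ι}
    (hf : ∀ j, i ≠ j → f j ≤ 0) (hsum : ∑ j, f j = 0) :
    ∑ j ∈ Finset.univ.erase i, |f j| = f i := by
  calc ∑ j ∈ Finset.univ.erase i, |f j|
      = ∑ j ∈ Finset.univ.erase i, -f j :=
        Finset.sum_congr rfl fun j hj => abs_of_nonpos (hf j (Finset.ne_of_mem_erase hj).symm)
    _ = f i := by
        rw [Finset.sum_neg_distrib, Finset.sum_erase_eq_sub (Finset.mem_univ i), hsum, zero_sub,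
          neg_neg]

section SpectrumOfScaledMatrix

variable {n : Type*} [Fintype n] [DecidableEq n]

open scoped ComplexOrder MatrixOrder in
theorem im_eq_zero_of_mem_spectrum_posSemidef_mul_isHermitian_s13 {𝕜 : Type*} [RCLike 𝕜]
    {P A : Matrix n n 𝕜} (hP : P.PosSemidef) (hA : A.IsHermitian)
    {μ : 𝕜} (hμ : μ ∈ spectrum 𝕜 (P * A)) : RCLike.im μ = 0 := by
  obtain ⟨B, rfl⟩ := CStarAlgebra.nonneg_iff_eq_star_mul_self.mp hP.nonneg
  obtain rfl | hμ₀ := eq_or_ne μ 0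
  · exact map_zero RCLike.im
  have hBAB : μ ∈ spectrum 𝕜 (B * A * Bᴴ) := by
    have hcomm := spectrum.nonzero_mul_comm (𝕜 := 𝕜) Bᴴ (B * A)
    rw [← Matrix.mul_assoc] at hcomm
    exact (hcomm.subset ⟨hμ, hμ₀⟩).1
  rw [(isHermitian_mul_mul_conjTranspose B hA).spectrum_eq_image_range] at hBAB
  obtain ⟨x, -, rfl⟩ := hBAB
  exact RCLike.ofReal_im x

open scoped ComplexOrder in
theorem im_eq_zero_of_mem_spectrum_diagonal_mul {L : Matrix n n ℂ} (hL : L.IsHermitian)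
    {d : n → ℝ} (hd : ∀ i, 0 ≤ d i) {μ : ℂ}
    (hμ : μ ∈ spectrum ℂ (diagonal (fun i => (d i : ℂ)) * L)) : μ.im = 0 :=
  have hpos : (diagonal fun i => (d i : ℂ)).PosSemidef :=
    posSemidef_diagonal_iff.mpr fun i => Complex.zero_le_real.mpr (hd i)
  im_eq_zero_of_mem_spectrum_posSemidef_mul_isHermitian_s13 hpos hL hμ

theorem exists_norm_sub_diag_le_of_mem_spectrum {K : Type*} [NormedField K] {A : Matrix n n K}
    {μ : K} (hμ : μ ∈ spectrum K A) :
    ∃ i, ‖μ - A i i‖ ≤ ∑ j ∈ Finset.univ.erase i, ‖A i j‖ := by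
  rw [← Matrix.spectrum_toLin', ← Module.End.hasEigenvalue_iff_mem_spectrum] at hμ
  simpa only [mem_closedBall_iff_norm] using eigenvalue_mem_ball hμ

theorem exists_norm_sub_mul_diag_le_of_mem_spectrum_diagonal_mul {K : Type*} [NormedField K]
    {L : Matrix n n K} {r : n → ℝ} (hdom : ∀ i, ∑ j ∈ Finset.univ.erase i, ‖L i j‖ ≤ r i)
    {d : n → K} {μ : K} (hμ : μ ∈ spectrum K (diagonal d * L)) :
    ∃ i, ‖μ - d i * L i i‖ ≤ ‖d i‖ * r i := by
  obtain ⟨i, hi⟩ := exists_norm_sub_diag_le_of_mem_spectrum hμ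
  simp only [diagonal_mul, norm_mul, ← Finset.mul_sum] at hi
  exact ⟨i, hi.trans (mul_le_mul_of_nonneg_left (hdom i) (norm_nonneg _))⟩

theorem re_mem_Ico_of_mem_spectrum_diagonal_mul {L : Matrix n n ℂ}
    (hdom : ∀ i, ∑ j ∈ Finset.univ.erase i, ‖L i j‖ ≤ (L i i).re)
    {d : n → ℝ} (hd : ∀ i, 0 ≤ d i) (hd_lt : ∀ i, d i * (L i i).re < 1) {μ : ℂ}
    (hμ : μ ∈ spectrum ℂ (diagonal (fun i => (d i : ℂ)) * L)) : μ.re ∈ Set.Ico (0 : ℝ) 2 := by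
  obtain ⟨i, hi⟩ := exists_norm_sub_mul_diag_le_of_mem_spectrum_diagonal_mul hdom hμ
  have hre : |μ.re - d i * (L i i).re| ≤ d i * (L i i).re := by
    simpa [abs_of_nonneg (hd i)] using (Complex.abs_re_le_norm _).trans hi
  rw [abs_le] at hre
  constructor <;> linarith [hd_lt i]

theorem fromBlocks_one_sub_eq_one_sub_diagonal_mul {m R : Type*} [Fintype m] [DecidableEq m]
    [Ring R] (d : m → R) (L : Matrix (m ⊕ n) (m ⊕ n) R) :
    fromBlocks (1 - diagonal d * L.toBlocks₁₁) (-(diagonal d * L.toBlocks₁₂)) 0 1 =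
      1 - diagonal (Sum.elim d 0) * L := by
  ext (i | i) (j | j) <;> simp [toBlocks₁₁, toBlocks₁₂, one_apply]

theorem map_one_sub_diagonal_mul {R S : Type*} [Ring R] [Ring S] (f : R →+* S) (d : n → R)
    (L : Matrix n n R) :
    (1 - diagonal d * L).map f = 1 - diagonal (fun i => f (d i)) * L.map f := by
  rw [Matrix.map_sub f (map_sub f), Matrix.map_one f (map_zero f) (map_one f), Matrix.map_mul,
    diagonal_map (map_zero f)]

theorem EAPIII_closed_loop_marginally_stable_general {L : Matrix n n ℂ} (hL : L.IsHermitian)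
    (hdom : ∀ i, ∑ j ∈ Finset.univ.erase i, ‖L i j‖ ≤ (L i i).re)
    {d : n → ℝ} (hd : ∀ i, 0 ≤ d i) (hd_lt : ∀ i, d i * (L i i).re < 1) :
    ∀ μ ∈ spectrum ℂ (1 - diagonal (fun i => (d i : ℂ)) * L),
      μ.im = 0 ∧ μ.re ∈ Set.Ioc (-1 : ℝ) 1 := by
  intro μ hμ
  have hν : 1 - μ ∈ spectrum ℂ (diagonal (fun i => (d i : ℂ)) * L) := by
    rw [← map_one (algebraMap ℂ (Matrix n n ℂ)), ← spectrum.singleton_sub_eq,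
      Set.singleton_sub] at hμ
    obtain ⟨ν, hν, rfl⟩ := hμ
    rwa [sub_sub_cancel]
  have him := im_eq_zero_of_mem_spectrum_diagonal_mul hL hd hν
  have hre := re_mem_Ico_of_mem_spectrum_diagonal_mul hdom hd hd_lt hν
  simp only [Complex.sub_im, Complex.one_im, zero_sub, neg_eq_zero] at him
  simp only [Complex.sub_re, Complex.one_re, Set.mem_Ico] at hre
  exact ⟨him, by linarith, by linarith⟩

end SpectrumOfScaledMatrix

theorem EAPIII_closed_loop_marginally_stable
    (N m : ℕ) (hN : 0 < N) (hm : 0 < m)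
    (L : Matrix (Fin N ⊕ Fin m) (Fin N ⊕ Fin m) ℝ)
    (hLsymm : Lᵀ = L)
    (hLoff : ∀ i j, i ≠ j → L i j ≤ 0)
    (hLrow : ∀ i, ∑ j, L i j = 0)
    (c : ℝ) (hc : 0 < c)
    (D : Matrix (Fin N) (Fin N) ℝ)
    (hD : D = Matrix.diagonal (fun i => (c + L (Sum.inl i) (Sum.inl i))⁻¹))
    (M : Matrix (Fin N ⊕ Fin m) (Fin N ⊕ Fin m) ℝ)
    (hM : M = Matrix.fromBlocks
      ((1 : Matrix (Fin N) (Fin N) ℝ) - D * L.toBlocks₁₁)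
      (-(D * L.toBlocks₁₂))
      (0 : Matrix (Fin m) (Fin N) ℝ)
      (1 : Matrix (Fin m) (Fin m) ℝ)) :
    ∀ μ ∈ spectrum ℂ (M.map (algebraMap ℝ ℂ)),
      μ.im = 0 ∧ μ.re ∈ Set.Ioc (-1 : ℝ) 1 := by
  have hdom : ∀ i, ∑ j ∈ Finset.univ.erase i, |L i j| = L i i := fun i =>
    sum_erase_abs_eq_of_sum_eq_zero (hLoff i) (hLrow i)
  have hdiag : ∀ i, 0 ≤ L i i := fun i => hdom i ▸ Finset.sum_nonneg fun _ _ => abs_nonneg _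
  have hden : ∀ i, 0 < c + L i i := fun i => add_pos_of_pos_of_nonneg hc (hdiag i)
  have hHerm : (L.map (algebraMap ℝ ℂ)).IsHermitian :=
    IsHermitian.map hLsymm _ fun x => (Complex.conj_ofReal x).symm
  rw [hM, hD, fromBlocks_one_sub_eq_one_sub_diagonal_mul, map_one_sub_diagonal_mul]
  refine EAPIII_closed_loop_marginally_stable_general hHerm ?_ ?_ ?_
  · exact fun i => by simpa using (hdom i).le
  · exact Sum.rec (fun _ => (inv_pos.mpr (hden _)).le) fun _ => le_rfl
  · rintro (i | i)
    · simpa [inv_mul_lt_one₀ (hden _)] using hc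
    · simp
end
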